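/- arXiv:2110.10458 — 2 statements merged into one kernel-verified Lean document; each statement's English description precedes it below -/
import Mathlib

section
/- Let T be a hermitian asymmetric triple isomorphism of 𝕆. Define T̃ : C₆ → C₆ by sending the matrix [[α, a, b], [a⋄, β, c], [b⋄, c⋄, γ]] (α, β, γ ∈ ℂ, a, b, c ∈ 𝕆) to [[α, T(a), T(b)⬝T(1)⋄], [T(a)⋄, β, T(c⋄)⋄], [T(1)⬝T(b)⋄, T(c⋄), γ]]. Then T̃ is a Jordan *-automorphism of C₆. -/
/-!
Write `u = T(1)` and `N(x) = x⬝x⋄ ∈ ℂ`. Since `T` commutes with the conjugation, replacing `y` by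
`ȳ` in the defining identity gives the bilinear form `T((x⬝y⋄)⬝z) = (T(x)⬝T(y)⋄)⬝T(z)`. The choice
`x = y` shows that `T` preserves `N`; in particular `N(u) = 1`. The choices `z = 1`, `y = 1`,
`x = 1` give
`T(x⬝y⋄) = (T(x)⬝T(y)⋄)⬝u`, `T(x⬝z) = (T(x)⬝u⋄)⬝T(z)`, `T(y⋄⬝z) = (u⬝T(y)⋄)⬝T(z)`.

Put `T₁(a) = T(a)`, `T₂(b) = T(b)⬝u⋄`, `T₃(c) = T(c⋄)⋄`, so that `T̃` applies `T₁, T₂, T₃` to the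
three off-diagonal entries. All three preserve `N`, because `N` is multiplicative, and the identities
above say exactly that
`T₁(b⬝c⋄) = T₂(b)⬝T₃(c)⋄`, `T₂(a⬝c) = T₁(a)⬝T₃(c)`, `T₃(a⋄⬝b) = T₁(a)⋄⬝T₂(b)`.
The coordinate formula `jord_hm` for the Jordan product of two hermitian matrices involves only these
three products and the polar form of `N`, so `T̃` is multiplicative (`hm_triality`). Bijectivity
follows from that of `T` and from right multiplication by `u⋄` being inverted by that by `u`.
-/

noncomputable section

open Matrix

/-- The biquaternions `ℍ_ℂ`. -/
abbrev HC : Type := Quaternion ℂ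

/-- The `ℂ`-linear quaternion conjugation `x ↦ x⋄` on `ℍ_ℂ`. -/
def qdia (x : HC) : HC := ⟨x.re, -x.imI, -x.imJ, -x.imK⟩

/-- Coefficientwise complex conjugation `x ↦ x̄` on `ℍ_ℂ`. -/
def qbar (x : HC) : HC :=
  ⟨starRingEnd ℂ x.re, starRingEnd ℂ x.imI, starRingEnd ℂ x.imJ, starRingEnd ℂ x.imK⟩

/-- The complex octonions `𝕆`, modelled as pairs of biquaternions. -/
abbrev Oct : Type := HC × HC

/-- Cayley–Dickson multiplication on `𝕆`. -/
def omul (x y : Oct) : Oct :=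
  (x.1 * y.1 - y.2 * qdia x.2, qdia x.1 * y.2 + y.1 * x.2)

/-- The octonion unit `1 = (1, 0)`. -/
def oone : Oct := (1, 0)

/-- The linear involution `x ↦ x⋄` on `𝕆`. -/
def odia (x : Oct) : Oct := (qdia x.1, -x.2)

/-- The conjugation `x ↦ x̄` on `𝕆`. -/
def obar (x : Oct) : Oct := (qbar x.1, qbar x.2)

/-- The conjugate-linear involution `x* = (x⋄)‾` on `𝕆`. -/
def ostar (x : Oct) : Oct := obar (odia x)

/-- `3×3` matrices of complex octonions. -/
abbrev M3O : Type := Matrix (Fin 3) (Fin 3) Oct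

/-- Matrix product formed using the octonion multiplication `⬝` on entries. -/
def mmulO (X Y : M3O) : M3O := Matrix.of fun i j => ∑ k : Fin 3, omul (X i k) (Y k j)

/-- The Jordan product `X∘Y = ½(X⬝Y + Y⬝X)` on `M₃(𝕆)`. -/
def jord (X Y : M3O) : M3O := (2⁻¹ : ℂ) • (mmulO X Y + mmulO Y X)

/-- The transpose with `⋄` applied entrywise, `Xᵈ`. -/
def mdia (X : M3O) : M3O := Matrix.of fun i j => odia (X j i)

/-- The involution `X*`: the conjugation `x ↦ x̄` applied entrywise. -/
def mstar (X : M3O) : M3O := Matrix.of fun i j => obar (X i j)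

/-- The Cartan factor of type 6: `C₆ = H₃(𝕆) = {X ∈ M₃(𝕆) : Xᵈ = X}`. -/
def H3O : Set M3O := {X | mdia X = X}

/-- The triple product `{X,Y,Z} = (X∘Y*)∘Z + (Z∘Y*)∘X − (X∘Z)∘Y*` on `C₆`. -/
def trip (X Y Z : M3O) : M3O :=
  jord (jord X (mstar Y)) Z + jord (jord Z (mstar Y)) X - jord (jord X Z) (mstar Y)

/-- The identity matrix `𝟏` of `M₃(𝕆)`. -/
def oneM : M3O := Matrix.of fun i j => if i = j then oone else 0

/-- A Jordan `*`-automorphism of `C₆`: a (ℂ-)linear bijection of `C₆ = H₃(𝕆)` onto itself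
preserving the Jordan product `∘` and the involution `*`. -/
def IsJordanStarAut (T : M3O → M3O) : Prop :=
  Set.BijOn T H3O H3O ∧
  (∀ X ∈ H3O, ∀ Y ∈ H3O, T (X + Y) = T X + T Y) ∧
  (∀ (c : ℂ), ∀ X ∈ H3O, T (c • X) = c • T X) ∧
  (∀ X ∈ H3O, ∀ Y ∈ H3O, T (jord X Y) = jord (T X) (T Y)) ∧
  (∀ X ∈ H3O, T (mstar X) = mstar (T X))

/-- A hermitian asymmetric triple isomorphism of `𝕆`: a `ℂ`-linear bijection `T` with
`T((x⬝y*)⬝z) = (T(x)⬝T(y)*)⬝T(z)` and `T(x̄) = T(x)‾`. -/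
def IsHATI (T : Oct → Oct) : Prop :=
  IsLinearMap ℂ T ∧ Function.Bijective T ∧
  (∀ x y z : Oct, T (omul (omul x (ostar y)) z) = omul (omul (T x) (ostar (T y))) (T z)) ∧
  (∀ x : Oct, T (obar x) = obar (T x))

/-- The map `T̃ : C₆ → C₆` induced by `T`, sending `[[α, a, b], [a⋄, β, c], [b⋄, c⋄, γ]]` to
`[[α, T(a), T(b)⬝T(1)⋄], [T(a)⋄, β, T(c⋄)⋄], [T(1)⬝T(b)⋄, T(c⋄), γ]]`. -/
def Ttilde (T : Oct → Oct) (X : M3O) : M3O :=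
  !![X 0 0, T (X 0 1), omul (T (X 0 2)) (odia (T oone));
     odia (T (X 0 1)), X 1 1, odia (T (odia (X 1 2)));
     omul (T oone) (odia (T (X 0 2))), T (odia (X 1 2)), X 2 2]

/-! ### Octonion identities -/

/-- The complex quadratic norm form of `𝕆`, characterised by `x⬝x⋄ = N(x)1`. -/
def onorm (x : Oct) : ℂ :=
  x.1.re ^ 2 + x.1.imI ^ 2 + x.1.imJ ^ 2 + x.1.imK ^ 2
    + x.2.re ^ 2 + x.2.imI ^ 2 + x.2.imJ ^ 2 + x.2.imK ^ 2

/-- The polar form `N(x+y) − N(x) − N(y)` of the norm form. -/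
def opol (x y : Oct) : ℂ := onorm (x + y) - onorm x - onorm y

lemma oct_ext {x y : Oct} (h1 : x.1.re = y.1.re) (h2 : x.1.imI = y.1.imI)
    (h3 : x.1.imJ = y.1.imJ) (h4 : x.1.imK = y.1.imK) (h5 : x.2.re = y.2.re)
    (h6 : x.2.imI = y.2.imI) (h7 : x.2.imJ = y.2.imJ) (h8 : x.2.imK = y.2.imK) : x = y :=
  Prod.ext (Quaternion.ext _ _ h1 h2 h3 h4) (Quaternion.ext _ _ h5 h6 h7 h8)

@[simp] lemma qdia_re (x : HC) : (qdia x).re = x.re := rfl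
@[simp] lemma qdia_imI (x : HC) : (qdia x).imI = -x.imI := rfl
@[simp] lemma qdia_imJ (x : HC) : (qdia x).imJ = -x.imJ := rfl
@[simp] lemma qdia_imK (x : HC) : (qdia x).imK = -x.imK := rfl
@[simp] lemma qbar_re (x : HC) : (qbar x).re = starRingEnd ℂ x.re := rfl
@[simp] lemma qbar_imI (x : HC) : (qbar x).imI = starRingEnd ℂ x.imI := rfl
@[simp] lemma qbar_imJ (x : HC) : (qbar x).imJ = starRingEnd ℂ x.imJ := rfl
@[simp] lemma qbar_imK (x : HC) : (qbar x).imK = starRingEnd ℂ x.imK := rfl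
@[simp] lemma oone_fst_re : oone.1.re = 1 := rfl
@[simp] lemma oone_fst_imI : oone.1.imI = 0 := rfl
@[simp] lemma oone_fst_imJ : oone.1.imJ = 0 := rfl
@[simp] lemma oone_fst_imK : oone.1.imK = 0 := rfl
@[simp] lemma oone_snd_re : oone.2.re = 0 := rfl
@[simp] lemma oone_snd_imI : oone.2.imI = 0 := rfl
@[simp] lemma oone_snd_imJ : oone.2.imJ = 0 := rfl
@[simp] lemma oone_snd_imK : oone.2.imK = 0 := rfl

lemma omul_add (x y z : Oct) : omul x (y + z) = omul x y + omul x z := by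
  apply oct_ext <;> simp [omul] <;> ring

lemma add_omul (x y z : Oct) : omul (x + y) z = omul x z + omul y z := by
  apply oct_ext <;> simp [omul] <;> ring

lemma omul_smul (c : ℂ) (x y : Oct) : omul x (c • y) = c • omul x y := by
  apply oct_ext <;> simp [omul] <;> ring

lemma smul_omul (c : ℂ) (x y : Oct) : omul (c • x) y = c • omul x y := by
  apply oct_ext <;> simp [omul] <;> ring

lemma omul_one (x : Oct) : omul x oone = x := by
  apply oct_ext <;> simp [omul]

lemma one_omul (x : Oct) : omul oone x = x := by
  apply oct_ext <;> simp [omul]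

lemma odia_odia (x : Oct) : odia (odia x) = x := by
  apply oct_ext <;> simp [odia]

lemma odia_add (x y : Oct) : odia (x + y) = odia x + odia y := by
  apply oct_ext <;> simp [odia] <;> ring

lemma odia_smul (c : ℂ) (x : Oct) : odia (c • x) = c • odia x := by
  apply oct_ext <;> simp [odia]

lemma odia_one : odia oone = oone := by
  apply oct_ext <;> simp [odia]

lemma odia_omul (x y : Oct) : odia (omul x y) = omul (odia y) (odia x) := by
  apply oct_ext <;> simp [omul, odia] <;> ring

lemma obar_omul (x y : Oct) : obar (omul x y) = omul (obar x) (obar y) := by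
  apply oct_ext <;> simp [omul, obar]

lemma obar_odia (x : Oct) : obar (odia x) = odia (obar x) := by
  apply oct_ext <;> simp [odia, obar]

lemma obar_obar (x : Oct) : obar (obar x) = x := by
  apply oct_ext <;> simp [obar]

lemma obar_one : obar oone = oone := by
  apply oct_ext <;> simp [obar]

lemma obar_smul_one (c : ℂ) : obar (c • oone) = (starRingEnd ℂ c) • oone := by
  apply oct_ext <;> simp [obar]

lemma onorm_odia (x : Oct) : onorm (odia x) = onorm x := by
  simp [onorm, odia]

lemma onorm_omul (x y : Oct) : onorm (omul x y) = onorm x * onorm y := by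
  simp [onorm, omul]; ring

lemma onorm_one : onorm oone = 1 := by
  simp [onorm]

lemma omul_odia_self (x : Oct) : omul x (odia x) = onorm x • oone := by
  apply oct_ext <;> simp [omul, odia, onorm] <;> ring

lemma omul_odia_polar (x y : Oct) :
    omul x (odia y) + omul y (odia x) = opol x y • oone := by
  apply oct_ext <;> simp [omul, odia, opol, onorm] <;> ring

lemma odia_omul_polar (x y : Oct) :
    omul (odia x) y + omul (odia y) x = opol x y • oone := by
  apply oct_ext <;> simp [omul, odia, opol, onorm] <;> ring

lemma omul_odia_cancel (x y : Oct) : omul (omul x (odia y)) y = onorm y • x := by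
  apply oct_ext <;> simp [omul, odia, onorm] <;> ring

lemma omul_cancel_odia (x y : Oct) : omul (omul x y) (odia y) = onorm y • x := by
  apply oct_ext <;> simp [omul, odia, onorm] <;> ring

lemma eq_smul_one_of_odia {x : Oct} (h : odia x = x) : x = x.1.re • oone := by
  have e1 := congrArg (fun z : Oct => z.1.imI) h
  have e2 := congrArg (fun z : Oct => z.1.imJ) h
  have e3 := congrArg (fun z : Oct => z.1.imK) h
  have e4 := congrArg (fun z : Oct => z.2.re) h
  have e5 := congrArg (fun z : Oct => z.2.imI) h
  have e6 := congrArg (fun z : Oct => z.2.imJ) h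
  have e7 := congrArg (fun z : Oct => z.2.imK) h
  simp only [odia, qdia_imI, qdia_imJ, qdia_imK, Quaternion.re_neg, Quaternion.imI_neg, Quaternion.imJ_neg,
    Quaternion.imK_neg, neg_eq_self] at e1 e2 e3 e4 e5 e6 e7
  apply oct_ext <;> simp [*]

/-! ### Coordinates on hermitian matrices -/

/-- The hermitian octonion matrix `[[α, a, b], [a⋄, β, c], [b⋄, c⋄, γ]]`. -/
def hm (α β γ : ℂ) (a b c : Oct) : M3O :=
  !![α • oone, a, b; odia a, β • oone, c; odia b, odia c, γ • oone]

lemma hm_mem (α β γ : ℂ) (a b c : Oct) : hm α β γ a b c ∈ H3O := by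
  change mdia _ = _
  ext1 i j
  fin_cases i <;> fin_cases j <;> simp [mdia, hm, odia_odia, odia_smul, odia_one]

lemma exists_hm {X : M3O} (hX : X ∈ H3O) : ∃ α β γ a b c, X = hm α β γ a b c := by
  have h : ∀ i j, odia (X j i) = X i j := fun i j => congrFun (congrFun hX i) j
  refine ⟨(X 0 0).1.re, (X 1 1).1.re, (X 2 2).1.re, X 0 1, X 0 2, X 1 2, ?_⟩
  ext1 i j
  fin_cases i <;> fin_cases j
  · exact eq_smul_one_of_odia (h 0 0)
  · rfl
  · rfl
  · exact (h 1 0).symm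
  · exact eq_smul_one_of_odia (h 1 1)
  · rfl
  · exact (h 2 0).symm
  · exact (h 2 1).symm
  · exact eq_smul_one_of_odia (h 2 2)

lemma hm_inj {α β γ α' β' γ' : ℂ} {a b c a' b' c' : Oct}
    (h : hm α β γ a b c = hm α' β' γ' a' b' c') :
    α = α' ∧ β = β' ∧ γ = γ' ∧ a = a' ∧ b = b' ∧ c = c' := by
  have e : ∀ i j, hm α β γ a b c i j = hm α' β' γ' a' b' c' i j := fun i j => by rw [h]
  have s : ∀ {p q : ℂ}, p • oone = q • oone → p = q := fun {p q} hpq => by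
    simpa using congrArg (fun z : Oct => z.1.re) hpq
  exact ⟨s (e 0 0), s (e 1 1), s (e 2 2), e 0 1, e 0 2, e 1 2⟩

lemma hm_add (α β γ α' β' γ' : ℂ) (a b c a' b' c' : Oct) :
    hm α β γ a b c + hm α' β' γ' a' b' c'
      = hm (α + α') (β + β') (γ + γ') (a + a') (b + b') (c + c') := by
  ext1 i j
  fin_cases i <;> fin_cases j <;> simp [hm, odia_add] <;> module

lemma smul_hm (r α β γ : ℂ) (a b c : Oct) :
    r • hm α β γ a b c = hm (r * α) (r * β) (r * γ) (r • a) (r • b) (r • c) := by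
  ext1 i j
  fin_cases i <;> fin_cases j <;> simp [hm, odia_smul, mul_smul]

/-- The Jordan product in coordinates: the octonions enter only through the polar form of the norm
and the three products `b⬝c⋄`, `a⬝c`, `a⋄⬝b`. -/
lemma jord_hm (α β γ α' β' γ' : ℂ) (a b c a' b' c' : Oct) :
    jord (hm α β γ a b c) (hm α' β' γ' a' b' c')
      = (2⁻¹ : ℂ) • hm (2 * α * α' + opol a a' + opol b b') (2 * β * β' + opol a a' + opol c c')
          (2 * γ * γ' + opol b b' + opol c c')
          ((α + β) • a' + (α' + β') • a + (omul b (odia c') + omul b' (odia c)))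
          ((α + γ) • b' + (α' + γ') • b + (omul a c' + omul a' c))
          ((β + γ) • c' + (β' + γ') • c + (omul (odia a) b' + omul (odia a') b)) := by
  unfold jord
  congr 1
  ext1 i j
  fin_cases i <;> fin_cases j <;>
    simp [mmulO, hm, Fin.sum_univ_three, omul_smul, smul_omul, omul_one, one_omul, odia_add,
      odia_smul, odia_omul, odia_odia] <;>
    try module
  · linear_combination (norm := module) omul_odia_polar a a' + omul_odia_polar b b'
  · linear_combination (norm := module) odia_omul_polar a a' + omul_odia_polar c c'
  · linear_combination (norm := module) odia_omul_polar b b' + odia_omul_polar c c'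

lemma mstar_hm (α β γ : ℂ) (a b c : Oct) :
    mstar (hm α β γ a b c)
      = hm (starRingEnd ℂ α) (starRingEnd ℂ β) (starRingEnd ℂ γ) (obar a) (obar b) (obar c) := by
  ext1 i j
  fin_cases i <;> fin_cases j <;> simp [mstar, hm, obar_smul_one, obar_odia]

/-! ### Triality -/

/-- Entrywise linear maps `T₁, T₂, T₃` that preserve the norm form and satisfy the three triality
identities respect the Jordan product. -/
lemma hm_triality (T₁ T₂ T₃ : Oct →ₗ[ℂ] Oct)
    (n₁ : ∀ x, onorm (T₁ x) = onorm x) (n₂ : ∀ x, onorm (T₂ x) = onorm x)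
    (n₃ : ∀ x, onorm (T₃ x) = onorm x)
    (t₁ : ∀ b c, T₁ (omul b (odia c)) = omul (T₂ b) (odia (T₃ c)))
    (t₂ : ∀ a c, T₂ (omul a c) = omul (T₁ a) (T₃ c))
    (t₃ : ∀ a b, T₃ (omul (odia a) b) = omul (odia (T₁ a)) (T₂ b))
    (F : M3O → M3O)
    (hF : ∀ α β γ a b c, F (hm α β γ a b c) = hm α β γ (T₁ a) (T₂ b) (T₃ c))
    (α β γ α' β' γ' : ℂ) (a b c a' b' c' : Oct) :
    F (jord (hm α β γ a b c) (hm α' β' γ' a' b' c'))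
      = jord (F (hm α β γ a b c)) (F (hm α' β' γ' a' b' c')) := by
  have p : ∀ S : Oct →ₗ[ℂ] Oct, (∀ x, onorm (S x) = onorm x) →
      ∀ x y, opol (S x) (S y) = opol x y := by
    intro S hS x y
    simp only [opol, ← map_add, hS]
  rw [hF, hF, jord_hm, jord_hm, smul_hm, hF, smul_hm]
  simp only [map_add, map_smul, t₁, t₂, t₃, p T₁ n₁, p T₂ n₂, p T₃ n₃]

/-- If `T` is a hermitian asymmetric triple isomorphism of `𝕆`, then the
induced map `T̃` is a Jordan `*`-automorphism of `C₆`. -/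
theorem statement12 (T : Oct → Oct) (hT : IsHATI T) :
    IsJordanStarAut (Ttilde T) := by
  obtain ⟨hlin, hbij, htri, hbar⟩ := hT
  have tri : ∀ x y z, T (omul (omul x (odia y)) z) = omul (omul (T x) (odia (T y))) (T z) := by
    intro x y z
    have h := htri x (obar y) z
    simpa only [ostar, hbar, obar_odia, obar_obar] using h
  have hu0 : T oone ≠ 0 := fun h => by
    have h1 : oone = (0 : Oct) := hbij.1 (h.trans hlin.map_zero.symm)
    exact one_ne_zero (α := ℂ) (congrArg (fun z : Oct => z.1.re) h1)
  have hN : ∀ x, onorm (T x) = onorm x := by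
    intro x
    -- `T((x⬝x⋄)⬝1)` is `N(x)T(1)` by linearity and `N(T(x))T(1)` by the triple identity.
    have h := tri x x oone
    rw [omul_odia_self, omul_odia_self, smul_omul, smul_omul, omul_one, one_omul,
      hlin.map_smul] at h
    exact (smul_left_injective ℂ hu0 h).symm
  have hu : onorm (T oone) = 1 := by rw [hN, onorm_one]
  have k1 : ∀ x y, T (omul x (odia y)) = omul (omul (T x) (odia (T y))) (T oone) := by
    intro x y
    simpa only [omul_one] using tri x y oone
  have k2 : ∀ x z, T (omul x z) = omul (omul (T x) (odia (T oone))) (T z) := by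
    intro x z
    simpa only [odia_one, omul_one] using tri x oone z
  have k3 : ∀ y z, T (omul (odia y) z) = omul (omul (T oone) (odia (T y))) (T z) := by
    intro y z
    simpa only [one_omul] using tri oone y z
  let T₁ : Oct →ₗ[ℂ] Oct := hlin.mk' T
  let T₂ : Oct →ₗ[ℂ] Oct :=
    { toFun := fun b => omul (T b) (odia (T oone))
      map_add' := fun x y => by rw [hlin.map_add, add_omul]
      map_smul' := fun r x => by rw [hlin.map_smul, smul_omul]; rfl }
  let T₃ : Oct →ₗ[ℂ] Oct :=
    { toFun := fun c => odia (T (odia c))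
      map_add' := fun x y => by rw [odia_add, hlin.map_add, odia_add]
      map_smul' := fun r x => by rw [odia_smul, hlin.map_smul, odia_smul]; rfl }
  have e₁ : ∀ x, T₁ x = T x := fun _ => rfl
  have e₂ : ∀ x, T₂ x = omul (T x) (odia (T oone)) := fun _ => rfl
  have e₃ : ∀ x, T₃ x = odia (T (odia x)) := fun _ => rfl
  have hF : ∀ α β γ a b c,
      Ttilde T (hm α β γ a b c) = hm α β γ (T₁ a) (T₂ b) (T₃ c) := by
    intro α β γ a b c
    ext1 i j
    fin_cases i <;> fin_cases j <;>
      simp [Ttilde, hm, e₁, e₂, e₃, odia_omul, odia_odia]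
  have hadd : ∀ X ∈ H3O, ∀ Y ∈ H3O, Ttilde T (X + Y) = Ttilde T X + Ttilde T Y := by
    intro X hX Y hY
    obtain ⟨α, β, γ, a, b, c, rfl⟩ := exists_hm hX
    obtain ⟨α', β', γ', a', b', c', rfl⟩ := exists_hm hY
    rw [hm_add, hF, hF, hF, hm_add, map_add, map_add, map_add]
  refine ⟨⟨?_, ?_, ?_⟩, hadd, ?_, ?_, ?_⟩
  · intro X hX
    obtain ⟨α, β, γ, a, b, c, rfl⟩ := exists_hm hX
    rw [hF]
    exact hm_mem _ _ _ _ _ _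
  · intro X hX Y hY h
    obtain ⟨α, β, γ, a, b, c, rfl⟩ := exists_hm hX
    obtain ⟨α', β', γ', a', b', c', rfl⟩ := exists_hm hY
    rw [hF, hF] at h
    obtain ⟨rfl, rfl, rfl, ha, hb, hc⟩ := hm_inj h
    have ha' : a = a' := hbij.1 ha
    have hb' : b = b' := by
      have h2 := congrArg (fun z => omul z (T oone)) hb
      simp only [e₂, omul_odia_cancel, hu, one_smul] at h2
      exact hbij.1 h2
    have hc' : c = c' := by
      have h3 := congrArg odia hc
      simp only [e₃, odia_odia] at h3
      simpa only [odia_odia] using congrArg odia (hbij.1 h3)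
    rw [ha', hb', hc']
  · intro Y hY
    obtain ⟨α, β, γ, a, b, c, rfl⟩ := exists_hm hY
    obtain ⟨a', ha⟩ := hbij.2 a
    obtain ⟨b', hb⟩ := hbij.2 (omul b (T oone))
    obtain ⟨c', hc⟩ := hbij.2 (odia c)
    refine ⟨hm α β γ a' b' (odia c'), hm_mem _ _ _ _ _ _, ?_⟩
    rw [hF, e₁, e₂, e₃, odia_odia, ha, hb, hc, omul_cancel_odia, hu, one_smul, odia_odia]
  · intro r X hX
    obtain ⟨α, β, γ, a, b, c, rfl⟩ := exists_hm hX
    rw [smul_hm, hF, hF, smul_hm, map_smul, map_smul, map_smul]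
  · intro X hX Y hY
    obtain ⟨α, β, γ, a, b, c, rfl⟩ := exists_hm hX
    obtain ⟨α', β', γ', a', b', c', rfl⟩ := exists_hm hY
    refine hm_triality T₁ T₂ T₃ hN ?_ ?_ ?_ ?_ ?_ (Ttilde T) hF _ _ _ _ _ _ _ _ _ _ _ _
    · intro x
      rw [e₂, onorm_omul, onorm_odia, hN, hu, mul_one]
    · intro x
      rw [e₃, onorm_odia, hN, onorm_odia]
    · intro x y
      rw [e₁, e₂, e₃, k2, odia_odia]
    · intro x y
      have h := k1 x (odia y)
      rw [odia_odia] at h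
      rw [e₁, e₂, e₃, h, omul_cancel_odia, hu, one_smul]
    · intro x y
      rw [e₁, e₂, e₃, odia_omul, odia_odia, k3, odia_omul, odia_omul, odia_odia]
  · intro X hX
    obtain ⟨α, β, γ, a, b, c, rfl⟩ := exists_hm hX
    rw [mstar_hm, hF, hF, mstar_hm]
    simp only [e₁, e₂, e₃, obar_omul, obar_odia, ← hbar, obar_one]
end
end

section
/- If q ∈ H₃(ℍ_ℂ) is a minimal projection, then the complex 6×6 matrix q̂ has rank two. -/
/-!
The matrix `q̂` of a projection `q` is idempotent, so its rank equals its trace, which is twice the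
sum of the scalars `d j = re (q j j)`; it suffices to show `∑ j, d j = 1`.

Some `d i` is nonzero: `q = q q*` gives `d i = ∑ k, ‖q i k‖²`, and `q ≠ 0`. For this `i`, apply
minimality to the diagonal matrix unit `E` at `i`: `q E q = c q`, that is `q j i * q i k = c q j k`.
The `(i, i)` entry gives `c = d i` (diagonal entries of `q` are scalars), and summing the real
parts of the `(j, j)` entries gives `d i * ∑ j, d j = ∑ j, re (q i j * q j i) = re ((q q) i i) = d i`.
-/

noncomputable section

open Matrix

/-- The embedding `ℂ ⊆ ℍ_ℂ` as scalar biquaternions. -/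
def cq (z : ℂ) : HC := ⟨z, 0, 0, 0⟩

/-- The conjugate-linear involution `x* = (x̄)⋄`. -/
def qstar (x : HC) : HC := qdia (qbar x)

/-- The natural (Euclidean/product) topology on the biquaternions `ℍ_ℂ ≅ ℂ⁴`. -/
instance : TopologicalSpace HC :=
  TopologicalSpace.induced (fun q : HC => (q.re, q.imI, q.imJ, q.imK)) inferInstance

/-- The 2×2 complex matrix `x̂` associated to a biquaternion `x`. -/
def hat (x : HC) : Matrix (Fin 2) (Fin 2) ℂ :=
  !![x.re + Complex.I * x.imI, x.imJ + Complex.I * x.imK;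
     -x.imJ + Complex.I * x.imK, x.re - Complex.I * x.imI]

/-- The `2n × 2n` complex matrix `Â` obtained by replacing every biquaternion entry `a`
of `A` by the 2×2 block `â`. -/
def hatM {n : ℕ} (A : Matrix (Fin n) (Fin n) HC) :
    Matrix (Fin n × Fin 2) (Fin n × Fin 2) ℂ :=
  Matrix.of fun p q => hat (A p.1 q.1) p.2 q.2

/-- `A` is `⋄`-hermitian: `Aᵈ = A`, i.e. `(A j i)⋄ = A i j` for all `i j`.
`H_n(ℍ_ℂ)` is the collection of all such matrices. -/
def IsHerm {n : ℕ} (A : Matrix (Fin n) (Fin n) HC) : Prop :=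
  ∀ i j, qdia (A j i) = A i j

/-- The defining properties of the sequence of determinants `(dt_n)_{n ≥ 1}`:
`D n` plays the role of `dt_{n+1} : H_{n+1}(ℍ_ℂ) → ℍ_ℂ`.
(i) continuity on `H_{n+1}(ℍ_ℂ)`; (ii) `dt₁((x₁₁)) = x₁₁`;
(iii) the inductive formula for `dt_{n+1}` when `x₁₁ ≠ 0`. -/
def IsDtSeq (D : ∀ n : ℕ, Matrix (Fin (n + 1)) (Fin (n + 1)) HC → HC) : Prop :=
  (∀ n : ℕ, ContinuousOn (D n) {A | IsHerm A}) ∧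
  (∀ A : Matrix (Fin 1) (Fin 1) HC, IsHerm A → D 0 A = A 0 0) ∧
  (∀ (n : ℕ) (A : Matrix (Fin (n + 2)) (Fin (n + 2)) HC), IsHerm A → A 0 0 ≠ 0 →
    D (n + 1) A = A 0 0 *
      D n (Matrix.of fun i j : Fin (n + 1) =>
        A i.succ j.succ - Ring.inverse (A 0 0) * A i.succ 0 * A 0 j.succ))

/-- The conjugate transpose `A*` of a matrix of biquaternions
(transpose with `*` applied entrywise). -/
def mstarB {n : ℕ} (A : Matrix (Fin n) (Fin n) HC) : Matrix (Fin n) (Fin n) HC :=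
  Matrix.of fun i j => qstar (A j i)

/-- The transpose `Aᵈ` with `⋄` applied entrywise. -/
def mdiaB {n : ℕ} (A : Matrix (Fin n) (Fin n) HC) : Matrix (Fin n) (Fin n) HC :=
  Matrix.of fun i j => qdia (A j i)

/-- The Jordan product `A∘B = ½(AB + BA)` on `M₃(ℍ_ℂ)`. -/
def jordB (A B : Matrix (Fin 3) (Fin 3) HC) : Matrix (Fin 3) (Fin 3) HC :=
  (2⁻¹ : ℂ) • (A * B + B * A)

/-- The triple product `{A,B,C} = ½(AB*C + CB*A)` on `H₃(ℍ_ℂ)`. -/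
def tripB (A B C : Matrix (Fin 3) (Fin 3) HC) : Matrix (Fin 3) (Fin 3) HC :=
  (2⁻¹ : ℂ) • (A * mstarB B * C + C * mstarB B * A)

/-- A projection in `H₃(ℍ_ℂ)`: `P ∈ H₃(ℍ_ℂ)` with `P* = P` and `P∘P = P`. -/
def IsProjB (P : Matrix (Fin 3) (Fin 3) HC) : Prop :=
  IsHerm P ∧ mstarB P = P ∧ jordB P P = P

/-- A minimal projection in `H₃(ℍ_ℂ)`: a nonzero projection `P` with `{P,X,P} ∈ ℂ·P`
for every `X ∈ H₃(ℍ_ℂ)`. -/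
def IsMinProjB (P : Matrix (Fin 3) (Fin 3) HC) : Prop :=
  IsProjB P ∧ P ≠ 0 ∧
    ∀ X : Matrix (Fin 3) (Fin 3) HC, IsHerm X → ∃ c : ℂ, tripB P X P = c • P

lemma qdia_zero : qdia 0 = 0 := by
  have h : (0 : HC) = ⟨0, 0, 0, 0⟩ := rfl
  simp [qdia, h]
  rfl

lemma qdia_one : qdia 1 = 1 := by
  have h : (1 : HC) = ⟨1, 0, 0, 0⟩ := rfl
  simp [qdia, h]
  rfl

lemma qstar_zero : qstar 0 = 0 := by
  have h : (0 : HC) = ⟨0, 0, 0, 0⟩ := rfl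
  simp [qstar, qbar, qdia, h]
  rfl

lemma qstar_one : qstar 1 = 1 := by
  have h : (1 : HC) = ⟨1, 0, 0, 0⟩ := rfl
  simp [qstar, qbar, qdia, h]
  rfl

lemma re_sum_three (f : Fin 3 → HC) : (∑ k, f k).re = ∑ k, (f k).re := by
  simp only [Fin.sum_univ_three, Quaternion.re_add]

lemma hat_mul (x y : HC) : hat (x * y) = hat x * hat y := by
  have hI := Complex.I_mul_I
  ext a b
  fin_cases a <;> fin_cases b <;>
    simp [hat, Matrix.mul_apply, Fin.sum_univ_two] <;> grind

lemma hat_sum {ι : Type*} (s : Finset ι) (f : ι → HC) :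
    hat (∑ i ∈ s, f i) = ∑ i ∈ s, hat (f i) := by
  have h0 : hat 0 = 0 := by
    have h : (0 : HC) = ⟨0, 0, 0, 0⟩ := rfl
    ext a b
    fin_cases a <;> fin_cases b <;> simp [hat, h]
  have hadd : ∀ x y, hat (x + y) = hat x + hat y := by
    intro x y
    ext a b
    fin_cases a <;> fin_cases b <;> simp [hat] <;> ring
  exact map_sum (⟨⟨hat, h0⟩, hadd⟩ : HC →+ Matrix (Fin 2) (Fin 2) ℂ) f s

lemma hatM_mul {n : ℕ} (A B : Matrix (Fin n) (Fin n) HC) : hatM (A * B) = hatM A * hatM B := by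
  ext ⟨i, a⟩ ⟨j, b⟩
  simp only [hatM, Matrix.of_apply, Matrix.mul_apply, hat_sum, Matrix.sum_apply, hat_mul,
    Fintype.sum_prod_type]

lemma trace_hatM {n : ℕ} (A : Matrix (Fin n) (Fin n) HC) :
    (hatM A).trace = 2 * ∑ i, (A i i).re := by
  rw [Matrix.trace, Fintype.sum_prod_type, Finset.mul_sum]
  refine Finset.sum_congr rfl fun i _ => ?_
  simp [hatM, hat, Fin.sum_univ_two]
  ring

lemma rank_eq_trace_of_idem {ι : Type*} [Fintype ι] [DecidableEq ι] (A : Matrix ι ι ℂ)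
    (h : A * A = A) : (A.rank : ℂ) = A.trace := by
  have hi : IsIdempotentElem (Matrix.toLin' A) := by
    rw [IsIdempotentElem, Module.End.mul_eq_comp, ← Matrix.toLin'_mul, h]
  rw [← Matrix.trace_toLin'_eq, (LinearMap.IsIdempotentElem.isProj_range _ hi).trace,
    Matrix.rank, Matrix.toLin'_apply']

lemma re_mul_comm (x y : HC) : (x * y).re = (y * x).re := by
  simp
  ring

/-- `re (x x*)` is the squared Euclidean norm of the coefficient vector of `x`. -/
lemma re_mul_qstar (x : HC) : (x * qstar x).re =
    ((Complex.normSq x.re + Complex.normSq x.imI + Complex.normSq x.imJ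
      + Complex.normSq x.imK : ℝ) : ℂ) := by
  rw [Quaternion.re_mul]
  simp [qstar, qdia, qbar, Complex.normSq_eq_conj_mul_self]
  ring

/-- A nonzero projection has a nonzero diagonal entry, since `re (q i i) = ∑ k, ‖q i k‖²`. -/
lemma exists_diag_ne {q : Matrix (Fin 3) (Fin 3) HC} (hs : mstarB q = q) (hqq : q * q = q)
    (h0 : q ≠ 0) : ∃ i, (q i i).re ≠ 0 := by
  by_contra! hd
  apply h0
  ext1 i k
  have h1 : ∑ k, (q i k * q k i).re = 0 := by
    have h2 := hd i
    rwa [← hqq, Matrix.mul_apply, re_sum_three] at h2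
  have hst : ∀ k, q k i = qstar (q i k) := fun k => by
    conv_lhs => rw [← hs]
    rfl
  simp only [hst, re_mul_qstar] at h1
  rw [← Complex.ofReal_sum, Complex.ofReal_eq_zero, Finset.sum_eq_zero_iff_of_nonneg] at h1
  · have h2 := h1 k (Finset.mem_univ _)
    have a1 := Complex.normSq_nonneg (q i k).re
    have a2 := Complex.normSq_nonneg (q i k).imI
    have a3 := Complex.normSq_nonneg (q i k).imJ
    have a4 := Complex.normSq_nonneg (q i k).imK
    ext1
    · exact Complex.normSq_eq_zero.1 (by linarith)
    · exact Complex.normSq_eq_zero.1 (by linarith)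
    · exact Complex.normSq_eq_zero.1 (by linarith)
    · exact Complex.normSq_eq_zero.1 (by linarith)
  · intro k _
    have a1 := Complex.normSq_nonneg (q i k).re
    have a2 := Complex.normSq_nonneg (q i k).imI
    have a3 := Complex.normSq_nonneg (q i k).imJ
    have a4 := Complex.normSq_nonneg (q i k).imK
    exact add_nonneg (add_nonneg (add_nonneg a1 a2) a3) a4

lemma sum_diag_eq_one {q : Matrix (Fin 3) (Fin 3) HC} (hh : IsHerm q) (hqq : q * q = q)
    (hmin : ∀ X : Matrix (Fin 3) (Fin 3) HC, IsHerm X → ∃ c : ℂ, tripB q X q = c • q)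
    {i : Fin 3} (hi : (q i i).re ≠ 0) : ∑ j, (q j j).re = 1 := by
  have hX : IsHerm (Matrix.single i i (1 : HC)) := by
    intro a b
    by_cases h : i = a ∧ i = b
    · obtain ⟨rfl, rfl⟩ := h
      rw [Matrix.single_apply_same, qdia_one]
    · rw [Matrix.single_apply_of_ne _ _ _ _ _ h,
        Matrix.single_apply_of_ne _ _ _ _ _ (fun h' => h h'.symm), qdia_zero]
  have hXs : mstarB (Matrix.single i i (1 : HC)) = Matrix.single i i 1 := by
    ext1 a b
    by_cases h : i = a ∧ i = b
    · obtain ⟨rfl, rfl⟩ := h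
      rw [mstarB, Matrix.of_apply, Matrix.single_apply_same, qstar_one]
    · rw [mstarB, Matrix.of_apply, Matrix.single_apply_of_ne _ _ _ _ _ h,
        Matrix.single_apply_of_ne _ _ _ _ _ (fun h' => h h'.symm), qstar_zero]
  obtain ⟨c, hc⟩ := hmin _ hX
  have hent : ∀ j, (q j i * q i j).re = c * (q j j).re := by
    intro j
    have h1 : q * Matrix.single i i (1 : HC) * q = c • q := by
      rw [← hc, tripB, hXs, ← two_smul ℂ, smul_smul]
      simp
    have h2 := congrArg QuaternionAlgebra.re (congrFun (congrFun h1 j) j)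
    have h3 : (q * Matrix.single i i (1 : HC) * q) j j = q j i * q i j := by
      simp [Matrix.mul_apply, Matrix.single_apply, Finset.sum_ite_eq, ite_and]
    rw [h3] at h2
    simpa using h2
  have hcd : c = (q i i).re := by
    have h1 := hent i
    have h2 := hh i i
    have hI : (q i i).imI = 0 := by
      have := congrArg QuaternionAlgebra.imI h2
      exact self_eq_neg.1 this.symm
    have hJ : (q i i).imJ = 0 := by
      have := congrArg QuaternionAlgebra.imJ h2
      exact self_eq_neg.1 this.symm
    have hK : (q i i).imK = 0 := by
      have := congrArg QuaternionAlgebra.imK h2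
      exact self_eq_neg.1 this.symm
    simp only [Quaternion.re_mul, hI, hJ, hK] at h1
    apply mul_right_cancel₀ hi
    linear_combination -h1
  have hsum : ∑ j, (q j i * q i j).re = (q i i).re := by
    conv_rhs => rw [← hqq, Matrix.mul_apply, re_sum_three]
    exact Finset.sum_congr rfl fun j _ => re_mul_comm _ _
  simp only [hent, ← Finset.mul_sum, hcd] at hsum
  exact mul_left_cancel₀ hi (by rw [hsum, mul_one])

/-- If `q ∈ H₃(ℍ_ℂ)` is a minimal projection, then the complex `6×6`
matrix `q̂` has rank two. -/
theorem statement14 (q : Matrix (Fin 3) (Fin 3) HC) (hq : IsMinProjB q) :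
    (hatM q).rank = 2 := by
  obtain ⟨⟨hh, hs, hj⟩, h0, hmin⟩ := hq
  have hqq : q * q = q := by
    rw [jordB, ← two_smul ℂ, smul_smul] at hj
    simpa using hj
  obtain ⟨i, hi⟩ := exists_diag_ne hs hqq h0
  have hr := rank_eq_trace_of_idem (hatM q) (by rw [← hatM_mul, hqq])
  rw [trace_hatM, sum_diag_eq_one hh hqq hmin hi, mul_one] at hr
  exact_mod_cast hr
end
end
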